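/- Let B₊ denote the open upper half unit ball in ℝ³, let m ∈ ℕ, and let β = (β₁,β₂,β₃) ∈ ℕ³ be a multi-index with β₁+β₂+β₃ ≤ m. Let f : ℝ³ → ℝ be of class C^{m+1} on an open neighborhood of the closure of B₊, with f(x₁,x₂,0) = 0 whenever (x₁,x₂,0) lies in the closure of B₊. Then (∫_{B₊} |D^β(f/x₃)(x)|² dx)^{1/2} ≤ 2·(∫_{B₊} |(D^β ∂₃ f)(x)|² dx)^{1/2}, where f/x₃ denotes the function x ↦ f(x)/x₃ on B₊. -/

import Mathlib

/-!
On `Bplus`, write `u = f / x₃` and `h = ∂₃ f`. The idea is to carry one function `F` through all the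
conormal derivatives, so that `D^β u = F / x₃` and `D^β h = ∂₃ F` hold on `Bplus`, with `F` of class
`C¹` near the closed half ball and `F = 0` on the flat disc. Initially `F = f`. A tangential
derivative `∂ᵢ` sends `F` to `∂ᵢ F`, and `x₃∂₃` sends `F` to `x₃∂₃F - F`, because
`x₃∂₃ (F / x₃) = (x₃∂₃F - F) / x₃` and `∂₃ (x₃∂₃F - F) = x₃∂₃∂₃F`. Both operations cost one derivative
and preserve the vanishing on the disc (`HardyPair.tangential`, `HardyPair.conormal`).

This reduces the theorem to Hardy's inequality with constant `2` on every vertical segment.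
With `φ(0) = 0`,
`(φ/t)² - 4 φ'² ≤ 2 (φ/t)² - 4 (φ/t) φ' = (-2 φ²/t)'`,
and the primitive `-2 φ²/t` vanishes at `0` and is nonpositive at the other end point
(`hardy_segment`). Fubini's theorem then gives the inequality on the half ball.
-/

open scoped BigOperators
open MeasureTheory

/-- Partial derivative in the `i`-th coordinate direction, as an operator on functions. -/
noncomputable def pdOp (i : Fin 3) (f : (Fin 3 → ℝ) → ℝ) : (Fin 3 → ℝ) → ℝ :=
  fun x => fderiv ℝ f x (Pi.single i 1)

/-- The conormal vector field `x₃ ∂₃`, as an operator on functions. -/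
noncomputable def zOp (f : (Fin 3 → ℝ) → ℝ) : (Fin 3 → ℝ) → ℝ :=
  fun x => x 2 * fderiv ℝ f x (Pi.single 2 1)

/-- The conormal differential operator `D^β = ∂₁^{β₁} ∂₂^{β₂} (x₃∂₃)^{β₃}`. -/
noncomputable def Dco (β : Fin 3 → ℕ) (f : (Fin 3 → ℝ) → ℝ) : (Fin 3 → ℝ) → ℝ :=
  (pdOp 0)^[β 0] ((pdOp 1)^[β 1] (zOp^[β 2] f))

/-- The open upper half unit ball in ℝ³. -/
def Bplus : Set (Fin 3 → ℝ) :=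
  {x | x 0 ^ 2 + x 1 ^ 2 + x 2 ^ 2 < 1 ∧ 0 < x 2}

open Set

/-! ### The half ball and its closure -/

/-- The closed upper half unit ball, described by inequalities. -/
def closedHalfBall : Set (Fin 3 → ℝ) :=
  {x | x 0 ^ 2 + x 1 ^ 2 + x 2 ^ 2 ≤ 1 ∧ 0 ≤ x 2}

lemma isOpen_Bplus : IsOpen Bplus := by
  change IsOpen ({x : Fin 3 → ℝ | x 0 ^ 2 + x 1 ^ 2 + x 2 ^ 2 < 1} ∩ {x | 0 < x 2})
  exact (isOpen_lt (by fun_prop) (by fun_prop)).inter (isOpen_lt (by fun_prop) (by fun_prop))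

lemma Bplus_subset_closedHalfBall : Bplus ⊆ closedHalfBall :=
  fun _ hx => ⟨hx.1.le, hx.2.le⟩

lemma isCompact_closedHalfBall : IsCompact closedHalfBall := by
  refine Metric.isCompact_of_isClosed_isBounded ?_ ?_
  · change IsClosed ({x : Fin 3 → ℝ | x 0 ^ 2 + x 1 ^ 2 + x 2 ^ 2 ≤ 1} ∩ {x | 0 ≤ x 2})
    exact (isClosed_le (by fun_prop) (by fun_prop)).inter
      (isClosed_le (by fun_prop) (by fun_prop))
  · refine Metric.isBounded_closedBall (x := (0 : Fin 3 → ℝ)) (r := 1) |>.subset ?_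
    intro x hx
    rw [mem_closedBall_zero_iff, pi_norm_le_iff_of_nonneg zero_le_one]
    have h := hx.1
    intro i
    rw [Real.norm_eq_abs]
    refine abs_le_of_sq_le_sq (b := 1) ?_ zero_le_one
    fin_cases i <;> simp only [Fin.zero_eta, Fin.mk_one, Fin.reduceFinMk, one_pow] <;>
      nlinarith [sq_nonneg (x 0), sq_nonneg (x 1), sq_nonneg (x 2)]

lemma closedHalfBall_subset_closure : closedHalfBall ⊆ closure Bplus := by
  intro x hx
  -- Move from `x` towards the interior point `(0, 0, 1/2)`.
  let g : ℝ → Fin 3 → ℝ := fun t => ![(1 - t) * x 0, (1 - t) * x 1, (1 - t) * x 2 + t / 2]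
  have hg : Continuous g := by
    refine continuous_pi fun i => ?_
    fin_cases i <;> simp [g] <;> fun_prop
  have h0 : (0 : ℝ) ∈ closure (Ioo (0 : ℝ) 1) := by
    rw [closure_Ioo zero_ne_one]; simp
  have hmap : MapsTo g (Ioo (0 : ℝ) 1) Bplus := by
    rintro t ⟨ht0, ht1⟩
    obtain ⟨h1, h2⟩ := hx
    have h3 : x 2 ≤ 1 := by nlinarith [sq_nonneg (x 0), sq_nonneg (x 1)]
    constructor
    · simp only [g, Matrix.cons_val_zero, Matrix.cons_val_one, Matrix.cons_val]
      have e1 := mul_le_mul_of_nonneg_left h1 (sq_nonneg (1 - t))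
      have e2 := mul_le_mul_of_nonneg_left h3 (mul_pos ht0 (sub_pos.2 ht1)).le
      nlinarith
    · simp only [g, Matrix.cons_val]
      have := mul_nonneg (sub_pos.2 ht1).le h2
      linarith
  have h := map_mem_closure hg h0 hmap
  have hx0 : g 0 = x := by
    ext i; fin_cases i <;> simp [g]
  rwa [hx0] at h

/-! ### Calculus of the partial derivatives -/

lemma pdOp_congr {s : Set (Fin 3 → ℝ)} (hs : IsOpen s) {g k : (Fin 3 → ℝ) → ℝ}
    (h : ∀ x ∈ s, g x = k x) (i : Fin 3) {x : Fin 3 → ℝ} (hx : x ∈ s) :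
    pdOp i g x = pdOp i k x := by
  have : g =ᶠ[nhds x] k := by filter_upwards [hs.mem_nhds hx] with y hy using h y hy
  simp only [pdOp, this.fderiv_eq]

lemma contDiffOn_pdOp {V : Set (Fin 3 → ℝ)} (hV : IsOpen V) {n : ℕ} {F : (Fin 3 → ℝ) → ℝ}
    (hF : ContDiffOn ℝ ((n + 1 : ℕ) + 1) F V) (i : Fin 3) : ContDiffOn ℝ (n + 1) (pdOp i F) V := by
  have h := hF.fderiv_of_isOpen (m := (n + 1 : ℕ)) hV le_rfl
  have h' := h.clm_apply (contDiffOn_const (c := (Pi.single i 1 : Fin 3 → ℝ)))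
  exact_mod_cast h'

lemma pdOp_comm {V : Set (Fin 3 → ℝ)} (hV : IsOpen V) {n : ℕ} {F : (Fin 3 → ℝ) → ℝ}
    (hF : ContDiffOn ℝ ((n + 1 : ℕ) + 1) F V) (i j : Fin 3) {x : Fin 3 → ℝ} (hx : x ∈ V) :
    pdOp i (pdOp j F) x = pdOp j (pdOp i F) x := by
  have hd : DifferentiableAt ℝ (fderiv ℝ F) x :=
    ((hF.fderiv_of_isOpen (m := (n + 1 : ℕ)) hV le_rfl).differentiableOn (by simp)).differentiableAt
      (hV.mem_nhds hx)
  have hs : IsSymmSndFDerivAt ℝ F x := by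
    refine (hF.contDiffAt (hV.mem_nhds hx)).isSymmSndFDerivAt ?_
    rw [minSmoothness_of_isRCLikeNormedField]
    push_cast
    rw [add_assoc, one_add_one_eq_two]
    exact le_add_self
  have key : ∀ a b : Fin 3 → ℝ, fderiv ℝ (fun y => fderiv ℝ F y a) x b
      = fderiv ℝ (fderiv ℝ F) x b a := by
    intro a b
    rw [fderiv_clm_apply hd (differentiableAt_const a)]
    simp
  change fderiv ℝ (fun y => fderiv ℝ F y (Pi.single j 1)) x (Pi.single i 1)
    = fderiv ℝ (fun y => fderiv ℝ F y (Pi.single i 1)) x (Pi.single j 1)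
  rw [key, key]
  exact hs.eq _ _

lemma fderiv_coord_apply (x v : Fin 3 → ℝ) :
    fderiv ℝ (fun y : Fin 3 → ℝ => y 2) x v = v 2 := by
  have : HasFDerivAt (fun y : Fin 3 → ℝ => y 2)
      (ContinuousLinearMap.proj (R := ℝ) (φ := fun _ : Fin 3 => ℝ) 2) x :=
    (ContinuousLinearMap.proj (R := ℝ) (φ := fun _ : Fin 3 => ℝ) 2).hasFDerivAt
  rw [this.fderiv]; rfl

lemma pdOp_mul_coord {g : (Fin 3 → ℝ) → ℝ} {x : Fin 3 → ℝ} (hg : DifferentiableAt ℝ g x)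
    (i : Fin 3) :
    pdOp i (fun y => y 2 * g y) x = x 2 * pdOp i g x + g x * (Pi.single i 1 : Fin 3 → ℝ) 2 := by
  have hc : DifferentiableAt ℝ (fun y : Fin 3 → ℝ => y 2) x := by fun_prop
  simp only [pdOp]
  rw [fderiv_fun_mul hc hg]
  simp [fderiv_coord_apply]

/-- The quotient rule for `F / x₃`, cleared of the first power of `x₃`. -/
lemma pdOp_div_coord {F : (Fin 3 → ℝ) → ℝ} {x : Fin 3 → ℝ} (hF : DifferentiableAt ℝ F x)
    (hx : x 2 ≠ 0) (i : Fin 3) :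
    x 2 * pdOp i (fun y => F y / y 2) x
      = pdOp i F x - F x / x 2 * (Pi.single i 1 : Fin 3 → ℝ) 2 := by
  have hc : DifferentiableAt ℝ (fun y : Fin 3 → ℝ => y 2) x := by fun_prop
  have hq : DifferentiableAt ℝ (fun y => F y / y 2) x := by
    simp only [div_eq_mul_inv]
    exact hF.mul (hc.inv hx)
  have hU : IsOpen {y : Fin 3 → ℝ | y 2 ≠ 0} := isOpen_ne_fun (by fun_prop) (by fun_prop)
  have h := pdOp_congr hU (g := F) (k := fun y => y 2 * (F y / y 2))
    (fun y hy => by rw [mul_div_cancel₀ _ hy]) i hx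
  rw [h, pdOp_mul_coord hq]
  ring

/-! ### Pairs `F / x₃`, `∂₃ F` and conormal derivatives -/

/-- `F` is of class `C^{n+1}` on `V`, vanishes on the open flat disc, and represents `u` and `h` on
`Bplus` as `u = F / x₃` and `h = ∂₃ F`. -/
structure HardyPair (V : Set (Fin 3 → ℝ)) (n : ℕ) (F u h : (Fin 3 → ℝ) → ℝ) : Prop where
  smooth : ContDiffOn ℝ (n + 1) F V
  disc : ∀ x : Fin 3 → ℝ, x 0 ^ 2 + x 1 ^ 2 < 1 → x 2 = 0 → F x = 0
  quot : ∀ x ∈ Bplus, u x = F x / x 2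
  deriv : ∀ x ∈ Bplus, h x = pdOp 2 F x

lemma HardyPair.differentiableAt {V : Set (Fin 3 → ℝ)} (hV : IsOpen V) {n : ℕ}
    {F u h : (Fin 3 → ℝ) → ℝ} (H : HardyPair V n F u h) {x : Fin 3 → ℝ} (hx : x ∈ V) :
    DifferentiableAt ℝ F x :=
  (H.smooth.differentiableOn (by simp)).differentiableAt (hV.mem_nhds hx)

lemma disc_subset {V : Set (Fin 3 → ℝ)} (hBV : closure Bplus ⊆ V) {x : Fin 3 → ℝ}
    (h1 : x 0 ^ 2 + x 1 ^ 2 < 1) (h2 : x 2 = 0) : x ∈ V :=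
  hBV (closedHalfBall_subset_closure ⟨by rw [h2]; linarith, h2.ge⟩)

lemma HardyPair.tangential {V : Set (Fin 3 → ℝ)} (hV : IsOpen V) (hBV : closure Bplus ⊆ V)
    {i : Fin 3} (hi : i ≠ 2) {n : ℕ} {F u h : (Fin 3 → ℝ) → ℝ} (H : HardyPair V (n + 1) F u h) :
    HardyPair V n (pdOp i F) (pdOp i u) (pdOp i h) where
  smooth := contDiffOn_pdOp hV H.smooth i
  disc := by
    intro x h1 h2
    have hd := H.differentiableAt hV (disc_subset hBV h1 h2)
    have hl : HasDerivAt (fun t : ℝ => x + t • (Pi.single i 1 : Fin 3 → ℝ)) (Pi.single i 1) 0 := by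
      simpa using ((hasDerivAt_id (0 : ℝ)).smul_const (Pi.single i 1 : Fin 3 → ℝ)).const_add x
    have hcomp : HasDerivAt (fun t : ℝ => F (x + t • (Pi.single i 1 : Fin 3 → ℝ)))
        (pdOp i F x) 0 := by
      have h0 : HasFDerivAt F (fderiv ℝ F x) (x + (0 : ℝ) • (Pi.single i 1 : Fin 3 → ℝ)) := by
        simpa using hd.hasFDerivAt
      exact h0.comp_hasDerivAt (0 : ℝ) hl
    have hopen : ∀ᶠ t : ℝ in nhds 0, (x + t • (Pi.single i 1 : Fin 3 → ℝ)) 0 ^ 2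
        + (x + t • (Pi.single i 1 : Fin 3 → ℝ)) 1 ^ 2 < 1 := by
      have hcont : ContinuousAt (fun t : ℝ => (x + t • (Pi.single i 1 : Fin 3 → ℝ)) 0 ^ 2
        + (x + t • (Pi.single i 1 : Fin 3 → ℝ)) 1 ^ 2) 0 := by
        simp only [Pi.add_apply, Pi.smul_apply]
        fun_prop
      exact hcont.eventually_lt_const (by simpa using h1)
    have hz : (fun t : ℝ => F (x + t • (Pi.single i 1 : Fin 3 → ℝ))) =ᶠ[nhds 0] fun _ => 0 := by
      filter_upwards [hopen] with t ht
      refine H.disc _ ht ?_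
      simp [h2, hi.symm]
    exact hcomp.unique ((hasDerivAt_const (0 : ℝ) (0 : ℝ)).congr_of_eventuallyEq hz)
  quot := by
    intro x hx
    have hxV := hBV (subset_closure hx)
    rw [pdOp_congr isOpen_Bplus H.quot i hx, eq_div_iff hx.2.ne', mul_comm,
      pdOp_div_coord (H.differentiableAt hV hxV) hx.2.ne']
    simp [hi.symm]
  deriv := by
    intro x hx
    rw [pdOp_congr isOpen_Bplus H.deriv i hx]
    exact pdOp_comm hV H.smooth _ _ (hBV (subset_closure hx))

lemma HardyPair.conormal {V : Set (Fin 3 → ℝ)} (hV : IsOpen V) (hBV : closure Bplus ⊆ V)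
    {n : ℕ} {F u h : (Fin 3 → ℝ) → ℝ} (H : HardyPair V (n + 1) F u h) :
    HardyPair V n (fun x => zOp F x - F x) (zOp u) (zOp h) where
  smooth := by
    have hc : ContDiffOn ℝ (n + 1) (fun y : Fin 3 → ℝ => y 2) V :=
      ContDiff.contDiffOn (by fun_prop)
    refine ContDiffOn.sub (hc.mul (contDiffOn_pdOp hV H.smooth 2)) (H.smooth.of_le ?_)
    push_cast
    exact le_self_add
  disc := by
    intro x h1 h2
    simp [zOp, h2, H.disc x h1 h2]
  quot := by
    intro x hx
    have hxV := hBV (subset_closure hx)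
    have hx2 := hx.2.ne'
    have e : zOp u x = x 2 * pdOp 2 u x := rfl
    rw [e, pdOp_congr isOpen_Bplus H.quot 2 hx, pdOp_div_coord (H.differentiableAt hV hxV) hx2]
    have e' : zOp F x = x 2 * pdOp 2 F x := rfl
    rw [e']
    simp only [Pi.single_eq_same]
    field_simp
  deriv := by
    intro x hx
    have hxV := hBV (subset_closure hx)
    have e : zOp h x = x 2 * pdOp 2 h x := rfl
    rw [e, pdOp_congr isOpen_Bplus H.deriv 2 hx]
    have hd : DifferentiableAt ℝ (pdOp 2 F) x :=
      ((contDiffOn_pdOp hV H.smooth 2).differentiableOn (by simp)).differentiableAt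
        (hV.mem_nhds hxV)
    have hm : DifferentiableAt ℝ (fun y : Fin 3 → ℝ => y 2 * pdOp 2 F y) x := by fun_prop
    have e' : pdOp 2 (fun x => zOp F x - F x) x
        = pdOp 2 (fun y => y 2 * pdOp 2 F y) x - pdOp 2 F x := by
      change fderiv ℝ (fun x => x 2 * pdOp 2 F x - F x) x _ = _
      rw [fderiv_fun_sub hm (H.differentiableAt hV hxV)]
      rfl
    rw [e', pdOp_mul_coord hd]
    simp

lemma HardyPair.iterate {V : Set (Fin 3 → ℝ)} {op : ((Fin 3 → ℝ) → ℝ) → ((Fin 3 → ℝ) → ℝ)}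
    (hop : ∀ (n : ℕ) (F u h : (Fin 3 → ℝ) → ℝ), HardyPair V (n + 1) F u h →
      ∃ F', HardyPair V n F' (op u) (op h)) (n k : ℕ) :
    ∀ {F u h : (Fin 3 → ℝ) → ℝ}, HardyPair V (n + k) F u h →
      ∃ F', HardyPair V n F' (op^[k] u) (op^[k] h) := by
  induction k with
  | zero => exact fun H => ⟨_, H⟩
  | succ k ih =>
    intro F u h H
    obtain ⟨F', H'⟩ := hop (n + k) F u h H
    exact ih H'

/-! ### Hardy's inequality -/

/-- Hardy's inequality on a segment, with the two sides kept under one integral. -/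
lemma hardy_segment {φ φ' : ℝ → ℝ} {R : ℝ} (hR : 0 < R)
    (hd : ∀ t ∈ Icc 0 R, HasDerivAt φ (φ' t) t) (h0 : φ 0 = 0)
    (hint : IntegrableOn (fun t => (φ t / t) ^ 2 - 4 * φ' t ^ 2) (Ioo 0 R)) :
    ∫ t in Ioo 0 R, ((φ t / t) ^ 2 - 4 * φ' t ^ 2) ≤ 0 := by
  -- At `t = 0` the primitive takes the value `0`, as it should: division by zero is zero.
  let ψ : ℝ → ℝ := fun t => -2 * (φ t ^ 2 / t)
  have hψd : ∀ t ∈ Ioc 0 R,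
      HasDerivAt ψ (-2 * ((2 * φ t * φ' t * t - φ t ^ 2 * 1) / t ^ 2)) t := by
    intro t ht
    have h1 := ((hd t ⟨ht.1.le, ht.2⟩).pow 2).div (hasDerivAt_id t) ht.1.ne'
    refine (h1.const_mul (-2)).congr_deriv ?_
    simp
  have hψc : ContinuousOn ψ (Icc 0 R) := by
    intro t ht
    rcases eq_or_lt_of_le ht.1 with h | h
    · subst h
      -- `φ² / t` is the product of `φ` and its continuous difference quotient at `0`.
      have e : ψ = fun t => -2 * (φ t * dslope φ 0 t) := by
        funext t
        by_cases h : t = 0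
        · simp [ψ, h, h0]
        · simp only [ψ, dslope_of_ne _ h, slope_def_field, h0, sub_zero]
          ring
      rw [e]
      have c1 := (hd 0 ht).continuousAt
      have c2 : ContinuousAt (dslope φ 0) 0 :=
        continuousAt_dslope_same.2 (hd 0 ht).differentiableAt
      exact (continuousAt_const.mul (c1.mul c2)).continuousWithinAt
    · exact (hψd t ⟨h, ht.2⟩).continuousAt.continuousWithinAt
  have key := intervalIntegral.integral_le_sub_of_hasDeriv_right_of_le hR.le hψc
    (fun t ht => (hψd t ⟨ht.1, ht.2.le⟩).hasDerivWithinAt)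
    (φ := fun t => (φ t / t) ^ 2 - 4 * φ' t ^ 2)
    (by rwa [integrableOn_Icc_iff_integrableOn_Ioo]) (by
      intro t ht
      have ht0 : t ≠ 0 := ht.1.ne'
      have e : -2 * ((2 * φ t * φ' t * t - φ t ^ 2 * 1) / t ^ 2)
          = 2 * (φ t / t) ^ 2 - 4 * (φ t / t) * φ' t := by
        field_simp
        ring
      rw [e]
      nlinarith [sq_nonneg (φ t / t - 2 * φ' t)])
  rw [intervalIntegral.integral_of_le hR.le, integral_Ioc_eq_integral_Ioo] at key
  refine key.trans ?_
  have h1 : 0 ≤ φ R ^ 2 / R := by positivity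
  simp only [ψ, h0]
  simp
  linarith

lemma hasDerivAt_vertical {F : (Fin 3 → ℝ) → ℝ} {a b t : ℝ}
    (hF : DifferentiableAt ℝ F ![a, b, t]) :
    HasDerivAt (fun s : ℝ => F ![a, b, s]) (pdOp 2 F ![a, b, t]) t := by
  have hl : HasDerivAt (fun s : ℝ => (![a, b, s] : Fin 3 → ℝ)) (Pi.single 2 1) t := by
    rw [hasDerivAt_pi]
    intro i
    fin_cases i
    · simpa using hasDerivAt_const t a
    · simpa using hasDerivAt_const t b
    · simpa using hasDerivAt_id' t
  exact hF.hasFDerivAt.comp_hasDerivAt t hl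

/-- Points under a point of the half ball stay in the closed half ball. -/
lemma vertical_mem {V : Set (Fin 3 → ℝ)} (hBV : closure Bplus ⊆ V) {a b t R : ℝ}
    (hR : a ^ 2 + b ^ 2 + R ^ 2 ≤ 1) (ht : t ∈ Icc 0 R) :
    (![a, b, t] : Fin 3 → ℝ) ∈ closedHalfBall ∧ (![a, b, t] : Fin 3 → ℝ) ∈ V := by
  have h : (![a, b, t] : Fin 3 → ℝ) ∈ closedHalfBall := by
    refine ⟨?_, by simpa using ht.1⟩
    have := pow_le_pow_left₀ ht.1 ht.2 2
    simp
    linarith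
  exact ⟨h, hBV (closedHalfBall_subset_closure h)⟩

lemma HardyPair.continuousOn_pdOp {V : Set (Fin 3 → ℝ)} (hV : IsOpen V)
    {F u h : (Fin 3 → ℝ) → ℝ} (H : HardyPair V 0 F u h) : ContinuousOn (pdOp 2 F) V := by
  have h1 : ContinuousOn (fderiv ℝ F) V := H.smooth.continuousOn_fderiv_of_isOpen hV (by simp)
  exact h1.clm_apply continuousOn_const

lemma HardyPair.integrableOn_pdOp_sq {V : Set (Fin 3 → ℝ)} (hV : IsOpen V)
    (hBV : closure Bplus ⊆ V) {F u h : (Fin 3 → ℝ) → ℝ} (H : HardyPair V 0 F u h) :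
    IntegrableOn (fun x => pdOp 2 F x ^ 2) Bplus := by
  have hc : ContinuousOn (fun x => pdOp 2 F x ^ 2) closedHalfBall :=
    ((H.continuousOn_pdOp hV).mono (closedHalfBall_subset_closure.trans hBV)).pow 2
  exact (hc.integrableOn_compact isCompact_closedHalfBall).mono_set Bplus_subset_closedHalfBall

/-- By the mean value inequality `|F| ≤ C x₃` on the half ball, so `F / x₃` is bounded there. -/
lemma HardyPair.integrableOn_div_sq {V : Set (Fin 3 → ℝ)} (hV : IsOpen V)
    (hBV : closure Bplus ⊆ V) {F u h : (Fin 3 → ℝ) → ℝ} (H : HardyPair V 0 F u h) :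
    IntegrableOn (fun x => (F x / x 2) ^ 2) Bplus := by
  have hKV : closedHalfBall ⊆ V := closedHalfBall_subset_closure.trans hBV
  obtain ⟨C, hC⟩ := isCompact_closedHalfBall.exists_bound_of_continuousOn
    ((H.continuousOn_pdOp hV).mono hKV)
  have hBsub : Bplus ⊆ V := Bplus_subset_closedHalfBall.trans hKV
  refine IntegrableOn.of_bound
    ((measure_mono Bplus_subset_closedHalfBall).trans_lt isCompact_closedHalfBall.measure_lt_top)
    ?_ (C ^ 2) ?_
  · refine ContinuousOn.aestronglyMeasurable ?_ isOpen_Bplus.measurableSet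
    exact ((H.smooth.continuousOn.mono hBsub).div (by fun_prop) fun x hx => hx.2.ne').pow 2
  · refine (ae_restrict_iff' isOpen_Bplus.measurableSet).2 (Filter.Eventually.of_forall ?_)
    intro x hx
    have hxe : (![x 0, x 1, x 2] : Fin 3 → ℝ) = x := by
      ext i; fin_cases i <;> simp
    have hmv := norm_image_sub_le_of_norm_deriv_le_segment'
      (f := fun s : ℝ => F ![x 0, x 1, s]) (a := 0) (b := x 2) (C := C)
      (fun t ht => (hasDerivAt_vertical
        (H.differentiableAt hV (vertical_mem hBV hx.1.le ht).2)).hasDerivWithinAt)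
      (fun t ht => hC _ (vertical_mem hBV hx.1.le ⟨ht.1, ht.2.le⟩).1) (x 2) ⟨hx.2.le, le_rfl⟩
    have hz : F ![x 0, x 1, 0] = 0 := by
      apply H.disc
      · simp
        nlinarith [hx.1, sq_nonneg (x 2)]
      · simp
    simp only [hxe, hz, sub_zero] at hmv
    rw [norm_pow]
    refine pow_le_pow_left₀ (norm_nonneg _) ?_ 2
    rw [norm_div, div_le_iff₀ (norm_pos_iff.2 hx.2.ne'), Real.norm_of_nonneg hx.2.le]
    exact hmv

/-- Hardy's inequality on the half ball, by Fubini from the inequality on vertical segments. -/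
lemma HardyPair.integral_nonpos {V : Set (Fin 3 → ℝ)} (hV : IsOpen V)
    (hBV : closure Bplus ⊆ V) {F u h : (Fin 3 → ℝ) → ℝ} (H : HardyPair V 0 F u h) :
    ∫ x in Bplus, ((F x / x 2) ^ 2 - 4 * pdOp 2 F x ^ 2) ≤ 0 := by
  set g : (Fin 3 → ℝ) → ℝ := fun x => (F x / x 2) ^ 2 - 4 * pdOp 2 F x ^ 2 with hg
  have hgi : Integrable (Bplus.indicator g) :=
    (integrable_indicator_iff isOpen_Bplus.measurableSet).2
      ((H.integrableOn_div_sq hV hBV).sub ((H.integrableOn_pdOp_sq hV hBV).const_mul 4))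
  rw [← integral_indicator isOpen_Bplus.measurableSet]
  let e := MeasurableEquiv.piFinSuccAbove (fun _ : Fin 3 => ℝ) 2
  have he : MeasurePreserving e.symm volume volume :=
    (volume_preserving_piFinSuccAbove (fun _ : Fin 3 => ℝ) 2).symm e
  have hes : ∀ (t : ℝ) (y : Fin 2 → ℝ), e.symm (t, y) = ![y 0, y 1, t] := by
    intro t y
    rw [MeasurableEquiv.symm_apply_eq]
    refine Prod.ext rfl ?_
    funext i
    fin_cases i <;> rfl
  rw [← he.integral_comp' (Bplus.indicator g)]
  have hgi' : Integrable (fun z => Bplus.indicator g (e.symm z)) volume :=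
    (he.integrable_comp_emb e.symm.measurableEmbedding).2 hgi
  rw [Measure.volume_eq_prod] at hgi' ⊢
  rw [integral_prod_symm _ hgi']
  refine MeasureTheory.integral_nonpos fun y => ?_
  change ∫ t : ℝ, Bplus.indicator g (e.symm (t, y)) ≤ 0
  simp only [hes]
  by_cases hy : y 0 ^ 2 + y 1 ^ 2 < 1
  · set R := Real.sqrt (1 - (y 0 ^ 2 + y 1 ^ 2)) with hRdef
    have hR : 0 < R := Real.sqrt_pos.2 (by linarith)
    have hR2 : R ^ 2 = 1 - (y 0 ^ 2 + y 1 ^ 2) := Real.sq_sqrt (by linarith)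
    have hind : (fun t : ℝ => Bplus.indicator g ![y 0, y 1, t])
        = (Ioo 0 R).indicator fun t => g ![y 0, y 1, t] := by
      funext t
      have hiff : (![y 0, y 1, t] : Fin 3 → ℝ) ∈ Bplus ↔ t ∈ Ioo 0 R := by
        simp only [Bplus, mem_ofPred_eq, Matrix.cons_val_zero, Matrix.cons_val_one,
          Matrix.cons_val, mem_Ioo]
        constructor
        · rintro ⟨h1, h2⟩
          exact ⟨h2, lt_of_pow_lt_pow_left₀ 2 hR.le (by linarith)⟩
        · rintro ⟨h1, h2⟩
          have := pow_lt_pow_left₀ h2 h1.le two_ne_zero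
          exact ⟨by linarith, h1⟩
      by_cases ht : t ∈ Ioo 0 R
      · rw [indicator_of_mem ht, indicator_of_mem (hiff.2 ht)]
      · rw [indicator_of_notMem ht, indicator_of_notMem (fun h => ht (hiff.1 h))]
    rw [hind, integral_indicator measurableSet_Ioo]
    by_cases hint : IntegrableOn (fun t => g ![y 0, y 1, t]) (Ioo 0 R)
    · exact hardy_segment (φ := fun t => F ![y 0, y 1, t])
        (φ' := fun t => pdOp 2 F ![y 0, y 1, t]) hR
        (fun t ht => hasDerivAt_vertical
          (H.differentiableAt hV (vertical_mem hBV (by rw [hR2]; linarith) ht).2))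
        (H.disc _ (by simpa using hy) (by simp)) hint
    · rw [integral_undef hint]
  · refine (integral_eq_zero_of_ae (Filter.Eventually.of_forall fun t => ?_)).le
    refine indicator_of_notMem (fun ht => hy ?_) _
    have := ht.1
    simp at this
    nlinarith [sq_nonneg t]

/-! ### The conormal estimate -/

theorem stmt6 (m : ℕ) (β : Fin 3 → ℕ) (hβ : β 0 + β 1 + β 2 ≤ m)
    (f : (Fin 3 → ℝ) → ℝ)
    (V : Set (Fin 3 → ℝ)) (hV : IsOpen V) (hBV : closure Bplus ⊆ V)
    (hf : ContDiffOn ℝ (m + 1) f V)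
    (hbd : ∀ a b : ℝ, (![a, b, 0] : Fin 3 → ℝ) ∈ closure Bplus → f ![a, b, 0] = 0) :
    Real.sqrt (∫ x in Bplus, (Dco β (fun y => f y / y 2) x) ^ 2)
      ≤ 2 * Real.sqrt (∫ x in Bplus, (Dco β (pdOp 2 f) x) ^ 2) := by
  have H0 : HardyPair V (0 + β 0 + β 1 + β 2) f (fun y => f y / y 2) (pdOp 2 f) := by
    refine ⟨hf.of_le ?_, ?_, fun _ _ => rfl, fun _ _ => rfl⟩
    · have : 0 + β 0 + β 1 + β 2 + 1 ≤ m + 1 := by omega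
      exact_mod_cast this
    · intro x h1 h2
      have hxe : (![x 0, x 1, 0] : Fin 3 → ℝ) = x := by
        ext i; fin_cases i <;> simp [h2]
      have h := hbd (x 0) (x 1)
      rw [hxe] at h
      exact h (closedHalfBall_subset_closure ⟨by rw [h2]; linarith, h2.ge⟩)
  obtain ⟨F2, H2⟩ := HardyPair.iterate
    (fun _ _ _ _ H => ⟨_, HardyPair.conormal hV hBV H⟩) _ (β 2) H0
  obtain ⟨F1, H1⟩ := HardyPair.iterate
    (fun _ _ _ _ H => ⟨_, HardyPair.tangential hV hBV (i := 1) (by decide) H⟩) _ (β 1) H2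
  obtain ⟨F, H⟩ := HardyPair.iterate
    (fun _ _ _ _ H => ⟨_, HardyPair.tangential hV hBV (i := 0) (by decide) H⟩) _ (β 0) H1
  have hu : ∫ x in Bplus, (Dco β (fun y => f y / y 2) x) ^ 2
      = ∫ x in Bplus, (F x / x 2) ^ 2 :=
    setIntegral_congr_fun isOpen_Bplus.measurableSet fun x hx => congrArg (· ^ 2) (H.quot x hx)
  have hh : ∫ x in Bplus, (Dco β (pdOp 2 f) x) ^ 2 = ∫ x in Bplus, pdOp 2 F x ^ 2 :=
    setIntegral_congr_fun isOpen_Bplus.measurableSet fun x hx => congrArg (· ^ 2) (H.deriv x hx)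
  have key := H.integral_nonpos hV hBV
  rw [integral_sub (H.integrableOn_div_sq hV hBV) ((H.integrableOn_pdOp_sq hV hBV).const_mul 4),
    integral_const_mul] at key
  rw [hu, hh]
  calc Real.sqrt (∫ x in Bplus, (F x / x 2) ^ 2)
      ≤ Real.sqrt (2 ^ 2 * ∫ x in Bplus, pdOp 2 F x ^ 2) := Real.sqrt_le_sqrt (by linarith)
    _ = 2 * Real.sqrt (∫ x in Bplus, pdOp 2 F x ^ 2) := by
      rw [Real.sqrt_mul (by norm_num), Real.sqrt_sq (by norm_num)]
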